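/- arXiv:0906.2863 — 6 statements merged into one kernel-verified Lean document; each statement's English description precedes it below -/
import Mathlib

section
/- Let n, p ∈ ℕ with n ≥ 2 and p ≥ 2, and let A₁, A₂, …, A_p ∈ GL_n(ℂ) be such that for all i < j in {1,…,p}, the matrix A_i A_j⁻¹ is a pseudo-reflection. Then, after a simultaneous change of basis, the matrices A₁,…,A_p have n−1 common rows or n−1 common columns: there exists P ∈ GL_n(ℂ) and an index k ∈ {1,…,n} such that either (for all i, i' ∈ {1,…,p} and every l ≠ k, the l-th column of P A_i P⁻¹ equals the l-th column of P A_{i'} P⁻¹), or (for all i, i' ∈ {1,…,p} and every l ≠ k, the l-th row of P A_i P⁻¹ equals the l-th row of P A_{i'} P⁻¹). -/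
/-- `h` is a pseudo-reflection: `rank (h − 1) = 1`. -/
def IsPseudoReflection {n : ℕ} (h : Matrix (Fin n) (Fin n) ℂ) : Prop :=
  (h - 1).rank = 1

open Matrix

/-- Two vectors are proportional (all 2×2 minors vanish). -/
def VPar {n : ℕ} (u v : Fin n → ℂ) : Prop := ∀ i k, u i * v k = u k * v i

lemma VPar.symm' {n : ℕ} {u v : Fin n → ℂ} (h : VPar u v) : VPar v u := by
  intro i k
  have := h i k
  linear_combination -this

lemma VPar.trans' {n : ℕ} {a b c : Fin n → ℂ} (h1 : VPar a b) (h2 : VPar b c) (hb : b ≠ 0) :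
    VPar a c := by
  obtain ⟨t, ht⟩ := Function.ne_iff.mp hb
  intro i k
  have e1 := h1 i t
  have e2 := h1 k t
  have e3 := h2 t i
  have e4 := h2 t k
  have e5 := h2 i k
  simp only [Pi.zero_apply] at ht
  apply mul_left_cancel₀ ht
  linear_combination c k * e1 - c i * e2 + a t * e5

lemma VPar.smul' {n : ℕ} {u v : Fin n → ℂ} (h : VPar u v) (hu : u ≠ 0) :
    ∃ c : ℂ, v = c • u := by
  obtain ⟨t, ht⟩ := Function.ne_iff.mp hu
  simp only [Pi.zero_apply] at ht
  refine ⟨v t / u t, ?_⟩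
  ext i
  have := h t i
  simp only [Pi.smul_apply, smul_eq_mul]
  field_simp
  linear_combination this

lemma factor_of_rank {n : ℕ} (M : Matrix (Fin n) (Fin n) ℂ) (h : M.rank = 1) :
    ∃ x y, M = vecMulVec x y := by
  unfold Matrix.rank at h
  obtain ⟨v, -, hv⟩ := finrank_eq_one_iff'.mp h
  have : ∀ j, ∃ c : ℂ, M *ᵥ (Pi.single j 1) = c • (v : Fin n → ℂ) := by
    intro j
    obtain ⟨c, hc⟩ := hv ⟨M *ᵥ (Pi.single j 1), ⟨Pi.single j 1, rfl⟩⟩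
    exact ⟨c, by simpa using (congrArg Subtype.val hc).symm⟩
  choose c hc using this
  refine ⟨v, c, ?_⟩
  ext i j
  have := congrFun (hc j) i
  simp [Matrix.mulVec_single_one] at this
  rw [this, vecMulVec_apply, mul_comm]

lemma dichotomy {n : ℕ} (u v u' v' x y : Fin n → ℂ)
    (h : vecMulVec u v - vecMulVec u' v' = vecMulVec x y) : VPar u u' ∨ VPar v v' := by
  by_contra hc
  push Not at hc
  obtain ⟨h1, h2⟩ := hc
  unfold VPar at h1 h2
  push Not at h1 h2
  obtain ⟨i, k, h1⟩ := h1
  obtain ⟨j, l, h2⟩ := h2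
  have e : ∀ a b, u a * v b - u' a * v' b = x a * y b := fun a b => congrFun (congrFun h a) b
  apply mul_ne_zero (sub_ne_zero.mpr h1) (sub_ne_zero.mpr h2)
  have e1 := e i j
  have e2 := e k l
  have e3 := e i l
  have e4 := e k j
  have key : (u i * v j - u' i * v' j) * (u k * v l - u' k * v' l)
      = (u i * v l - u' i * v' l) * (u k * v j - u' k * v' j) := by
    rw [e1, e2, e3, e4]; ring
  linear_combination -key

lemma det_updateCol_one' {n : ℕ} (k : Fin n) (u : Fin n → ℂ) :
    ((1 : Matrix (Fin n) (Fin n) ℂ).updateCol k u).det = u k := by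
  rw [← cramer_apply, cramer_one]; rfl

theorem levelt_stmt7 (n p : ℕ) (hn : 2 ≤ n) (hp : 2 ≤ p)
    (A : Fin p → Matrix (Fin n) (Fin n) ℂ) (hA : ∀ i, IsUnit (A i).det)
    (hpr : ∀ i j : Fin p, i < j → IsPseudoReflection (A i * (A j)⁻¹)) :
    ∃ P : Matrix (Fin n) (Fin n) ℂ, IsUnit P.det ∧ ∃ k : Fin n,
      ((∀ i i' : Fin p, ∀ l : Fin n, l ≠ k → ∀ m : Fin n,
          (P * A i * P⁻¹) m l = (P * A i' * P⁻¹) m l) ∨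
       (∀ i i' : Fin p, ∀ l : Fin n, l ≠ k → ∀ m : Fin n,
          (P * A i * P⁻¹) l m = (P * A i' * P⁻¹) l m)) := by
  have hlt : ∀ i j : Fin p, i < j → ∃ x y, A i - A j = vecMulVec x y := by
    intro i j hij
    obtain ⟨x, y, hxy⟩ := factor_of_rank _ (hpr i j hij)
    refine ⟨x, y ᵥ* A j, ?_⟩
    rw [← vecMulVec_mul, ← hxy, sub_mul, one_mul, Matrix.mul_assoc,
      Matrix.nonsing_inv_mul _ (hA j), Matrix.mul_one]
  have hall : ∀ i j : Fin p, ∃ x y, A i - A j = vecMulVec x y := by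
    intro i j
    rcases lt_trichotomy i j with h | h | h
    · exact hlt i j h
    · exact ⟨0, 0, by subst h; simp⟩
    · obtain ⟨x, y, hxy⟩ := hlt j i h
      exact ⟨-x, y, by rw [neg_vecMulVec, ← hxy, neg_sub]⟩
  let z : Fin p := ⟨0, by omega⟩
  let o : Fin p := ⟨1, by omega⟩
  have hne : A o - A z ≠ 0 := by
    intro h0
    have h1 := hpr z o (by simp [z, o])
    unfold IsPseudoReflection at h1
    rw [← sub_eq_zero.mp h0, Matrix.mul_nonsing_inv _ (hA o), sub_self, Matrix.rank_zero] at h1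
    exact zero_ne_one h1
  have hB : ∀ i, ∃ u v : Fin n → ℂ, A i - A z = vecMulVec u v ∧ (u = 0 ↔ v = 0) := by
    intro i
    obtain ⟨x, y, hxy⟩ := hall i z
    by_cases hx : x = 0
    · exact ⟨0, 0, by rw [hxy, hx]; simp, by simp⟩
    by_cases hy : y = 0
    · exact ⟨0, 0, by rw [hxy, hy]; simp, by simp⟩
    exact ⟨x, y, hxy, by simp [hx, hy]⟩
  choose u v huv hz using hB
  have hd : ∀ i j, VPar (u i) (u j) ∨ VPar (v i) (v j) := by
    intro i j
    obtain ⟨x, y, hxy⟩ := hall i j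
    apply dichotomy _ _ _ _ x y
    rw [← huv, ← huv, ← hxy]; abel
  have main : (∀ i j, VPar (u i) (u j)) ∨ (∀ i j, VPar (v i) (v j)) := by
    by_contra hc
    push Not at hc
    obtain ⟨⟨i, j, hij⟩, ⟨a, b, hab⟩⟩ := hc
    have nz1 : ∀ {x y : Fin n → ℂ}, ¬ VPar x y → x ≠ 0 := by
      rintro x y h rfl; exact h (fun _ _ => by simp)
    have nz2 : ∀ {x y : Fin n → ℂ}, ¬ VPar x y → y ≠ 0 := by
      rintro x y h rfl; exact h (fun _ _ => by simp)
    have hvi : v i ≠ 0 := fun h => nz1 hij ((hz i).mpr h)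
    have hvj : v j ≠ 0 := fun h => nz2 hij ((hz j).mpr h)
    have hv : VPar (v i) (v j) := (hd i j).resolve_left hij
    have hk : ∀ k, VPar (v k) (v i) := by
      intro k
      by_contra hk
      have h1 := (hd k i).resolve_right hk
      have h2 := (hd k j).resolve_right (fun h => hk (h.trans' hv.symm' hvj))
      have huk : u k ≠ 0 := fun h => nz1 hk ((hz k).mp h)
      exact hij (h1.symm'.trans' h2 huk)
    exact hab ((hk a).trans' (hk b).symm' hvi)
  have huo : u o ≠ 0 := by
    intro h; apply hne; rw [huv, h]; simp
  have hvo : v o ≠ 0 := fun h => huo ((hz o).mpr h)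
  have hconj : ∀ (P : Matrix (Fin n) (Fin n) ℂ) i, P * A i * P⁻¹ =
      P * A z * P⁻¹ + vecMulVec (P *ᵥ u i) (v i ᵥ* P⁻¹) := by
    intro P i
    rw [← vecMulVec_mul, ← mul_vecMulVec, ← huv]
    noncomm_ring
  rcases main with h | h
  · obtain ⟨k, hk⟩ := Function.ne_iff.mp huo
    set Q := (1 : Matrix (Fin n) (Fin n) ℂ).updateCol k (u o) with hQ
    have hQd : IsUnit Q.det := by rw [hQ, det_updateCol_one']; exact isUnit_iff_ne_zero.mpr hk
    have hQe : Q⁻¹ *ᵥ u o = Pi.single k 1 := by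
      have : u o = Q *ᵥ Pi.single k 1 := by
        rw [mulVec_single_one]; ext t; simp [hQ]
      rw [this, mulVec_mulVec, nonsing_inv_mul _ hQd, one_mulVec]
    refine ⟨Q⁻¹, by rw [isUnit_nonsing_inv_det_iff]; exact hQd, k, Or.inr ?_⟩
    have key : ∀ i, ∀ l, l ≠ k → ∀ m, (Q⁻¹ * A i * Q⁻¹⁻¹) l m = (Q⁻¹ * A z * Q⁻¹⁻¹) l m := by
      intro i l hl m
      obtain ⟨c, hc⟩ := (h o i).smul' huo
      rw [hconj, hc, mulVec_smul, hQe]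
      simp [vecMulVec_apply, hl]
    intro i i' l hl m
    rw [key i l hl, key i' l hl]
  · obtain ⟨k, hk⟩ := Function.ne_iff.mp hvo
    set P := ((1 : Matrix (Fin n) (Fin n) ℂ).updateCol k (v o))ᵀ with hP
    have hPd : IsUnit P.det := by
      rw [hP, det_transpose, det_updateCol_one']; exact isUnit_iff_ne_zero.mpr hk
    have hPe : v o ᵥ* P⁻¹ = Pi.single k 1 := by
      have : v o = Pi.single k 1 ᵥ* P := by
        rw [single_one_vecMul]; ext t; simp [hP]
      rw [this, vecMul_vecMul, mul_nonsing_inv _ hPd, vecMul_one]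
    refine ⟨P, hPd, k, Or.inl ?_⟩
    have key : ∀ i, ∀ l, l ≠ k → ∀ m, (P * A i * P⁻¹) m l = (P * A z * P⁻¹) m l := by
      intro i l hl m
      obtain ⟨c, hc⟩ := (h o i).smul' hvo
      rw [hconj, hc, smul_vecMul, hPe]
      simp [vecMulVec_apply, hl]
    intro i i' l hl m
    rw [key i l hl, key i' l hl]
end

section
/- Let n, p ∈ ℕ with n ≥ 2 and p ≥ 2, and let A₁, A₂, …, A_p be n×n complex matrices having n−1 common columns or n−1 common rows (i.e. there exists an index k such that all columns with index ≠ k, or all rows with index ≠ k, coincide across the family). Assume moreover that the matrices have a common eigenvalue, i.e. there exists λ ∈ ℂ which is an eigenvalue of every A_i. Then the matrices stabilize a common line or a common hyperplane: there exists a ℂ-subspace W of ℂⁿ with dim W = 1 or dim W = n−1 such that A_i W ⊆ W for every i ∈ {1,…,p}. -/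
/-- `μ ∈ ℂ` is an eigenvalue of the matrix `A`, for the standard action on `ℂⁿ`. -/
def HasEigen {n : ℕ} (A : Matrix (Fin n) (Fin n) ℂ) (μ : ℂ) : Prop :=
  ∃ v : Fin n → ℂ, v ≠ 0 ∧ A.mulVec v = μ • v


lemma ext_dot {n : ℕ} (k : Fin n) (u : {l : Fin n // l ≠ k} → ℂ) (f : Fin n → ℂ) :
    ∑ l, f l * (if h : l ≠ k then u ⟨l, h⟩ else 0) = ∑ s : {l : Fin n // l ≠ k}, f s * u s := by
  symm
  have h1 : ∑ s : {l : Fin n // l ≠ k}, f s * u s = ∑ s : {l : Fin n // l ≠ k},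
      (fun l => f l * (if h : l ≠ k then u ⟨l, h⟩ else 0)) s.1 :=
    Finset.sum_congr rfl fun s _ => by simp [s.2]
  rw [h1, ← Finset.sum_subtype (Finset.univ.filter (fun l => l ≠ k)) (by simp)
    (fun l => f l * (if h : l ≠ k then u ⟨l, h⟩ else 0))]
  refine Finset.sum_subset (Finset.subset_univ _) fun l _ hl => ?_
  have : l = k := by simpa using hl
  simp [this]

lemma ext_ne {n : ℕ} (k : Fin n) (u : {l : Fin n // l ≠ k} → ℂ) (hu : u ≠ 0) :
    (fun l => if h : l ≠ k then u ⟨l, h⟩ else 0) ≠ (0 : Fin n → ℂ) := by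
  intro h
  apply hu
  funext s
  have := congrFun h s.1
  simpa [s.2] using this

lemma card_ne {n : ℕ} (k : Fin n) : Fintype.card {l : Fin n // l ≠ k} = n - 1 := by
  simp

lemma col_case {n p : ℕ} (B : Fin p → Matrix (Fin n) (Fin n) ℂ) (i0 : Fin p) (k : Fin n)
    (hB : ∀ i i' : Fin p, ∀ l : Fin n, l ≠ k → ∀ m : Fin n, B i m l = B i' m l)
    (hs : ∀ i, ∃ v : Fin n → ℂ, v ≠ 0 ∧ (B i).mulVec v = 0) :
    (∃ v : Fin n → ℂ, v ≠ 0 ∧ ∀ i, (B i).mulVec v = 0) ∨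
    ∃ W : Submodule ℂ (Fin n → ℂ), Module.finrank ℂ W = n - 1 ∧ ∀ i x, (B i).mulVec x ∈ W := by
  let C : Matrix (Fin n) {l : Fin n // l ≠ k} ℂ := (B i0).submatrix id Subtype.val
  have hC : ∀ i u, (B i).mulVec (fun l => if h : l ≠ k then u ⟨l, h⟩ else 0) = C.mulVec u := by
    intro i u
    funext m
    simp only [Matrix.mulVec, dotProduct]
    rw [ext_dot k u]
    refine Finset.sum_congr rfl fun s _ => ?_
    rw [hB i i0 s s.2 m]
    rfl
  by_cases h : ∃ u, u ≠ 0 ∧ C.mulVec u = 0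
  · obtain ⟨u, hu, hCu⟩ := h
    exact Or.inl ⟨_, ext_ne k u hu, fun i => by rw [hC, hCu]⟩
  · push Not at h
    right
    have hker : LinearMap.ker C.mulVecLin = ⊥ := by
      rw [LinearMap.ker_eq_bot']
      intro u hu
      by_contra h0
      exact h u h0 hu
    have hr := LinearMap.finrank_range_add_finrank_ker C.mulVecLin
    rw [hker, finrank_bot, Module.finrank_fintype_fun_eq_card, card_ne, add_zero] at hr
    refine ⟨LinearMap.range C.mulVecLin, hr, fun i x => ?_⟩
    have hle : LinearMap.range C.mulVecLin ≤ LinearMap.range (B i).mulVecLin := by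
      rintro _ ⟨u, rfl⟩
      exact ⟨_, hC i u⟩
    have hr2 := LinearMap.finrank_range_add_finrank_ker (B i).mulVecLin
    rw [Module.finrank_fintype_fun_eq_card, Fintype.card_fin] at hr2
    have hpos : 0 < Module.finrank ℂ (LinearMap.ker (B i).mulVecLin) := by
      obtain ⟨v, hv, hv0⟩ := hs i
      exact Module.finrank_pos_iff_exists_ne_zero.mpr ⟨⟨v, hv0⟩, fun h => hv (congrArg Subtype.val h)⟩
    rw [Submodule.eq_of_le_of_finrank_le hle (by omega)]
    exact ⟨x, rfl⟩

lemma row_case {n p : ℕ} (hn : 2 ≤ n) (B : Fin p → Matrix (Fin n) (Fin n) ℂ) (i0 : Fin p) (k : Fin n)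
    (hB : ∀ i i' : Fin p, ∀ l : Fin n, l ≠ k → ∀ m : Fin n, B i l m = B i' l m)
    (hs : ∀ i, ∃ v : Fin n → ℂ, v ≠ 0 ∧ (B i).mulVec v = 0) :
    (∃ u : Fin n → ℂ, u ≠ 0 ∧ ∀ i, Matrix.vecMul u (B i) = 0) ∨
    ∃ W : Submodule ℂ (Fin n → ℂ), Module.finrank ℂ W = 1 ∧ ∀ i, ∀ x ∈ W, (B i).mulVec x = 0 := by
  let C : Matrix {l : Fin n // l ≠ k} (Fin n) ℂ := (B i0).submatrix Subtype.val id
  have hC : ∀ i u, Matrix.vecMul (fun l => if h : l ≠ k then u ⟨l, h⟩ else 0) (B i)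
      = C.transpose.mulVec u := by
    intro i u
    rw [← Matrix.mulVec_transpose]
    funext m
    simp only [Matrix.mulVec, dotProduct]
    rw [ext_dot k u]
    refine Finset.sum_congr rfl fun s _ => ?_
    rw [Matrix.transpose_apply, hB i i0 s s.2 m]
    rfl
  by_cases h : ∃ u, u ≠ 0 ∧ C.transpose.mulVec u = 0
  · obtain ⟨u, hu, hCu⟩ := h
    exact Or.inl ⟨_, ext_ne k u hu, fun i => by rw [hC, hCu]⟩
  · push Not at h
    right
    have hker : LinearMap.ker C.transpose.mulVecLin = ⊥ := by
      rw [LinearMap.ker_eq_bot']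
      intro u hu
      by_contra h0
      exact h u h0 hu
    have hr := LinearMap.finrank_range_add_finrank_ker C.transpose.mulVecLin
    rw [hker, finrank_bot, Module.finrank_fintype_fun_eq_card, card_ne, add_zero] at hr
    have hr' : C.rank = n - 1 := by rw [← Matrix.rank_transpose]; exact hr
    have hr3 := LinearMap.finrank_range_add_finrank_ker C.mulVecLin
    rw [Module.finrank_fintype_fun_eq_card, Fintype.card_fin] at hr3
    change C.rank + _ = n at hr3
    have h1 : Module.finrank ℂ (LinearMap.ker C.mulVecLin) = 1 := by omega
    refine ⟨LinearMap.ker C.mulVecLin, h1, fun i x hx => ?_⟩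
    have hle : LinearMap.ker (B i).mulVecLin ≤ LinearMap.ker C.mulVecLin := by
      intro v hv
      rw [LinearMap.mem_ker, Matrix.mulVecLin_apply] at hv ⊢
      funext s
      have := congrFun hv s.1
      simp only [Matrix.mulVec, dotProduct] at this ⊢
      rw [Pi.zero_apply] at this ⊢
      rw [← this]
      refine Finset.sum_congr rfl fun m _ => ?_
      rw [hB i i0 s s.2 m]
      rfl
    have hpos : 0 < Module.finrank ℂ (LinearMap.ker (B i).mulVecLin) := by
      obtain ⟨v, hv, hv0⟩ := hs i
      exact Module.finrank_pos_iff_exists_ne_zero.mpr ⟨⟨v, hv0⟩, fun h => hv (congrArg Subtype.val h)⟩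
    rw [← Submodule.eq_of_le_of_finrank_le hle (by omega)] at hx
    exact hx

/-- If `A₁,…,A_p` (`n, p ≥ 2`) have `n−1` common columns or `n−1` common
rows, and have a common eigenvalue, then they stabilize a common line or hyperplane. -/
theorem levelt_stmt8 (n p : ℕ) (hn : 2 ≤ n) (hp : 2 ≤ p)
    (A : Fin p → Matrix (Fin n) (Fin n) ℂ)
    (hcr : (∃ k : Fin n, ∀ i i' : Fin p, ∀ l : Fin n, l ≠ k → ∀ m : Fin n,
              A i m l = A i' m l) ∨
           (∃ k : Fin n, ∀ i i' : Fin p, ∀ l : Fin n, l ≠ k → ∀ m : Fin n,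
              A i l m = A i' l m))
    (heig : ∃ μ : ℂ, ∀ i, HasEigen (A i) μ) :
    ∃ W : Submodule ℂ (Fin n → ℂ),
      (Module.finrank ℂ W = 1 ∨ Module.finrank ℂ W = n - 1) ∧
      ∀ i, ∀ w ∈ W, (A i).mulVec w ∈ W := by
  obtain ⟨μ, hμ⟩ := heig
  let i0 : Fin p := ⟨0, by omega⟩
  let B : Fin p → Matrix (Fin n) (Fin n) ℂ := fun i => A i - μ • (1 : Matrix (Fin n) (Fin n) ℂ)
  have hBv : ∀ i v, (B i).mulVec v = (A i).mulVec v - μ • v := by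
    intro i v
    simp [B, Matrix.sub_mulVec, Matrix.smul_mulVec]
  have hAv : ∀ i v, (A i).mulVec v = (B i).mulVec v + μ • v := by
    intro i v
    rw [hBv, sub_add_cancel]
  have hs : ∀ i, ∃ v : Fin n → ℂ, v ≠ 0 ∧ (B i).mulVec v = 0 := by
    intro i
    obtain ⟨v, hv, h⟩ := hμ i
    exact ⟨v, hv, by rw [hBv, h, sub_self]⟩
  rcases hcr with ⟨k, hk⟩ | ⟨k, hk⟩
  · rcases col_case B i0 k (fun i i' l hl m => by simp [B, hk i i' l hl m]) hs with
      ⟨v, hv, h⟩ | ⟨W, hW, h⟩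
    · refine ⟨Submodule.span ℂ {v}, Or.inl (finrank_span_singleton hv), fun i w hw => ?_⟩
      obtain ⟨c, rfl⟩ := Submodule.mem_span_singleton.mp hw
      rw [hAv, Matrix.mulVec_smul, h, smul_zero, zero_add]
      exact Submodule.smul_mem _ _ hw
    · refine ⟨W, Or.inr hW, fun i w hw => ?_⟩
      rw [hAv]
      exact W.add_mem (h i w) (W.smul_mem _ hw)
  · rcases row_case hn B i0 k (fun i i' l hl m => by simp [B, hk i i' l hl m]) hs with
      ⟨u, hu, h⟩ | ⟨W, hW, h⟩
    · let f : Module.Dual ℂ (Fin n → ℂ) := dotProductBilin ℂ ℂ u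
      have hf : ∀ x, f x = u ⬝ᵥ x := fun x => rfl
      have hf0 : f ≠ 0 := by
        intro h0
        apply hu
        funext j
        have := hf (Pi.single j 1)
        rw [h0] at this
        simpa using this.symm
      have hfr := Module.Dual.finrank_ker_add_one_of_ne_zero hf0
      rw [Module.finrank_fintype_fun_eq_card, Fintype.card_fin] at hfr
      refine ⟨LinearMap.ker f, Or.inr (by omega), fun i w hw => ?_⟩
      rw [hAv]
      refine Submodule.add_mem _ ?_ (Submodule.smul_mem _ _ hw)
      rw [LinearMap.mem_ker, hf, Matrix.dotProduct_mulVec, h, zero_dotProduct]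
    · refine ⟨W, Or.inl hW, fun i w hw => ?_⟩
      rw [hAv, h i w hw, zero_add]
      exact W.smul_mem _ hw
end

section
/- Let n, p ∈ ℕ with n ≥ 2 and p ≥ 2, and let A₁, A₂, …, A_p be n×n complex matrices having n−1 common rows or n−1 common columns (i.e. there exists an index k such that all rows with index ≠ k, or all columns with index ≠ k, coincide across the family). Assume there exists a ℂ-subspace W of ℂⁿ with 0 < dim W < n such that A_i W ⊆ W for every i ∈ {1,…,p}. Then ⋂_{i=1}^{p} spec(A_i) ≠ ∅, i.e. there exists λ ∈ ℂ which is an eigenvalue of every A_i. -/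
/-- All the matrices agree on the invariant subspace. -/
lemma agree_on {n p : ℕ} (A : Fin p → Matrix (Fin n) (Fin n) ℂ) (i₀ : Fin p)
    (W : Submodule ℂ (Fin n → ℂ)) (h0 : 0 < Module.finrank ℂ W)
    (hW : ∀ i, ∀ w ∈ W, (A i).mulVec w ∈ W)
    (h : ∀ i, ∀ w ∈ W, (A i).mulVec w = (A i₀).mulVec w) :
    ∃ μ : ℂ, ∀ i, HasEigen (A i) μ := by
  haveI : Nontrivial W := Module.finrank_pos_iff.mp h0
  let g : Module.End ℂ W := (Matrix.toLin' (A i₀)).restrict (p := W) (q := W)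
    (fun w hw => by simpa using hW i₀ w hw)
  obtain ⟨μ, hμ⟩ := Module.End.exists_eigenvalue g
  obtain ⟨v, hv⟩ := hμ.exists_hasEigenvector
  refine ⟨μ, fun i => ⟨v, fun h => hv.2 (Subtype.ext h), ?_⟩⟩
  rw [h i v v.2]
  have := congrArg Subtype.val hv.apply_eq_smul
  simpa [g] using this

/-- All the matrices agree modulo the invariant subspace. -/
lemma agree_mod {n p : ℕ} (A : Fin p → Matrix (Fin n) (Fin n) ℂ) (i₀ : Fin p)
    (W : Submodule ℂ (Fin n → ℂ)) (h0 : Module.finrank ℂ W < n)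
    (hW : ∀ i, ∀ w ∈ W, (A i).mulVec w ∈ W)
    (h : ∀ i, ∀ v, (A i).mulVec v - (A i₀).mulVec v ∈ W) :
    ∃ μ : ℂ, ∀ i, HasEigen (A i) μ := by
  have hne : W ≠ ⊤ := by
    rintro rfl
    simp at h0
  haveI : Nontrivial ((Fin n → ℂ) ⧸ W) := Submodule.Quotient.nontrivial_iff.mpr hne
  let g : Module.End ℂ ((Fin n → ℂ) ⧸ W) := W.mapQ W (Matrix.toLin' (A i₀))
    (fun w hw => by simpa using hW i₀ w hw)
  obtain ⟨μ, hμ⟩ := Module.End.exists_eigenvalue g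
  obtain ⟨q, hq⟩ := hμ.exists_hasEigenvector
  obtain ⟨v, rfl⟩ := W.mkQ_surjective q
  have hvW : v ∉ W := fun hv => hq.2 (by simpa using hv)
  have hgv : (A i₀).mulVec v - μ • v ∈ W := by
    have := hq.apply_eq_smul
    rw [← Submodule.Quotient.eq]
    simpa [g] using this
  refine ⟨μ, fun i => ?_⟩
  by_contra hcon
  let f : (Fin n → ℂ) →ₗ[ℂ] (Fin n → ℂ) := Matrix.toLin' (A i) - μ • LinearMap.id
  have hf : ∀ x, f x = (A i).mulVec x - μ • x := fun x => by simp [f]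
  have hinj : ∀ x, f x = 0 → x = 0 := by
    intro x hx
    by_contra hx0
    exact hcon ⟨x, hx0, by rw [hf] at hx; exact sub_eq_zero.mp hx⟩
  let fW : W →ₗ[ℂ] W := f.restrict (p := W) (q := W)
    (fun w hw => by rw [hf]; exact W.sub_mem (hW i w hw) (W.smul_mem _ hw))
  have hfW : Function.Injective fW := by
    rw [← LinearMap.ker_eq_bot, LinearMap.ker_eq_bot']
    intro w hw
    exact Subtype.ext (hinj w (congrArg Subtype.val hw))
  have hsurj := LinearMap.injective_iff_surjective.mp hfW
  have hfv : f v ∈ W := by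
    rw [hf]
    have := W.add_mem (h i v) hgv
    simpa using this
  obtain ⟨w, hw⟩ := hsurj ⟨f v, hfv⟩
  have hw' : f w = f v := congrArg Subtype.val hw
  have : v - w = 0 := hinj _ (by rw [map_sub, hw', sub_self])
  exact hvW (by rw [sub_eq_zero.mp this]; exact w.2)

/-- If `A₁,…,A_p` (`n, p ≥ 2`) have `n−1` common rows or `n−1` common
columns, and stabilize a common nontrivial proper subspace of `ℂⁿ`, then they have a
common eigenvalue. -/
theorem levelt_stmt9 (n p : ℕ) (hn : 2 ≤ n) (hp : 2 ≤ p)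
    (A : Fin p → Matrix (Fin n) (Fin n) ℂ)
    (hcr : (∃ k : Fin n, ∀ i i' : Fin p, ∀ l : Fin n, l ≠ k → ∀ m : Fin n,
              A i l m = A i' l m) ∨
           (∃ k : Fin n, ∀ i i' : Fin p, ∀ l : Fin n, l ≠ k → ∀ m : Fin n,
              A i m l = A i' m l))
    (hW : ∃ W : Submodule ℂ (Fin n → ℂ), 0 < Module.finrank ℂ W ∧ Module.finrank ℂ W < n ∧
            ∀ i, ∀ w ∈ W, (A i).mulVec w ∈ W) :
    ∃ μ : ℂ, ∀ i, HasEigen (A i) μ := by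
  obtain ⟨W, h0, h1, hW⟩ := hW
  let i₀ : Fin p := ⟨0, by omega⟩
  rcases hcr with ⟨k, hk⟩ | ⟨k, hk⟩
  · have key : ∀ i v, ∃ c : ℂ, (A i).mulVec v - (A i₀).mulVec v = c • Pi.single k (1 : ℂ) := by
      intro i v
      refine ⟨((A i).mulVec v - (A i₀).mulVec v) k, ?_⟩
      ext l
      by_cases hl : l = k
      · subst hl
        simp
      · have : (A i).mulVec v l = (A i₀).mulVec v l := by
          simp only [Matrix.mulVec, dotProduct]
          exact Finset.sum_congr rfl fun m _ => by rw [hk i i₀ l hl m]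
        simp [this, hl]
    by_cases he : (Pi.single k (1 : ℂ) : Fin n → ℂ) ∈ W
    · refine agree_mod A i₀ W h1 hW fun i v => ?_
      obtain ⟨c, hc⟩ := key i v
      rw [hc]
      exact W.smul_mem _ he
    · refine agree_on A i₀ W h0 hW fun i w hw => ?_
      obtain ⟨c, hc⟩ := key i w
      have hm := W.sub_mem (hW i w hw) (hW i₀ w hw)
      rw [hc] at hm
      have hc0 : c = 0 := by
        by_contra hc0
        exact he ((W.smul_mem_iff hc0).mp hm)
      rw [hc0, zero_smul] at hc
      exact sub_eq_zero.mp hc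
  · have key : ∀ i v, v k = 0 → (A i).mulVec v = (A i₀).mulVec v := by
      intro i v hv
      ext m
      simp only [Matrix.mulVec, dotProduct]
      refine Finset.sum_congr rfl fun l _ => ?_
      by_cases hl : l = k
      · subst hl
        simp [hv]
      · rw [hk i i₀ l hl m]
    by_cases hH : ∀ w ∈ W, w k = 0
    · exact agree_on A i₀ W h0 hW fun i w hw => key i w (hH w hw)
    · push Not at hH
      obtain ⟨w, hw, hwk⟩ := hH
      refine agree_mod A i₀ W h1 hW fun i v => ?_
      have hu := key i (v - (v k / w k) • w) (by simp [hwk])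
      simp only [Matrix.mulVec_sub, Matrix.mulVec_smul] at hu
      have e : (A i).mulVec v - (A i₀).mulVec v
          = (v k / w k) • ((A i).mulVec w - (A i₀).mulVec w) := by
        rw [smul_sub, sub_eq_sub_iff_add_eq_add]
        rw [sub_eq_sub_iff_add_eq_add] at hu
        rw [hu, add_comm]
      rw [e]
      exact W.smul_mem _ (W.sub_mem (hW i w hw) (hW i₀ w hw))
end

section
/- Let n ≥ 2 and let A, B ∈ GL_n(ℂ) be such that A B⁻¹ is a pseudo-reflection. Then the subgroup of GL_n(ℂ) generated by A and B acts irreducibly on ℂⁿ (equivalently, there is no ℂ-subspace W of ℂⁿ with 0 < dim W < n satisfying A W ⊆ W and B W ⊆ W) if and only if spec(A) ∩ spec(B) = ∅, i.e. A and B have no common eigenvalue. -/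
theorem eigen_of_quot {n : ℕ} (A : Matrix (Fin n) (Fin n) ℂ) (W : Submodule ℂ (Fin n → ℂ))
    (hW : ∀ w ∈ W, A.mulVec w ∈ W) (μ : ℂ) (z : Fin n → ℂ) (hz : z ∉ W)
    (h : A.mulVec z - μ • z ∈ W) : HasEigen A μ := by
  by_contra hne
  let f : (Fin n → ℂ) →ₗ[ℂ] (Fin n → ℂ) := A.mulVecLin - μ • LinearMap.id
  have hf : ∀ x, f x = A.mulVec x - μ • x := fun x => by simp [f]
  have hinj : Function.Injective f := by
    rw [injective_iff_map_eq_zero]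
    intro x hx
    by_contra hx0
    exact hne ⟨x, hx0, by rw [hf] at hx; exact sub_eq_zero.mp hx⟩
  have hfW : ∀ w ∈ W, f w ∈ W := fun w hw => by
    rw [hf]; exact W.sub_mem (hW w hw) (W.smul_mem _ hw)
  have hinj' : Function.Injective (f.restrict hfW) := by
    intro x y hxy
    exact Subtype.ext (hinj (congrArg Subtype.val hxy))
  obtain ⟨w, hw⟩ := (LinearMap.injective_iff_surjective.mp hinj') ⟨f z, by rw [hf]; exact h⟩
  have : f w = f z := congrArg Subtype.val hw
  exact hz (hinj this ▸ w.2)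

theorem eigen_mono {n : ℕ} (A : Matrix (Fin n) (Fin n) ℂ) (W : Submodule ℂ (Fin n → ℂ))
    (hW : ∀ w ∈ W, A.mulVec w ∈ W) (hpos : 0 < Module.finrank ℂ W) :
    ∃ μ : ℂ, ∃ w ∈ W, w ≠ 0 ∧ A.mulVec w = μ • w := by
  have : Nontrivial W := Module.finrank_pos_iff.mp hpos
  let g : Module.End ℂ W := A.mulVecLin.restrict (p := W) (q := W) hW
  obtain ⟨μ, hμ⟩ := Module.End.exists_eigenvalue g
  obtain ⟨w, hw⟩ := hμ.exists_hasEigenvector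
  refine ⟨μ, w, w.2, fun h => hw.2 (Subtype.ext h), ?_⟩
  exact congrArg Subtype.val hw.apply_eq_smul

theorem eigen_quot {n : ℕ} (A : Matrix (Fin n) (Fin n) ℂ) (W : Submodule ℂ (Fin n → ℂ))
    (hW : ∀ w ∈ W, A.mulVec w ∈ W) (hlt : Module.finrank ℂ W < n) :
    ∃ μ : ℂ, ∃ z, z ∉ W ∧ A.mulVec z - μ • z ∈ W := by
  have hne : W ≠ ⊤ := by
    rintro rfl
    simp at hlt
  have : Nontrivial ((Fin n → ℂ) ⧸ W) := Submodule.Quotient.nontrivial_iff.mpr hne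
  let g : Module.End ℂ ((Fin n → ℂ) ⧸ W) := W.mapQ W A.mulVecLin hW
  obtain ⟨μ, hμ⟩ := Module.End.exists_eigenvalue g
  obtain ⟨q, hq⟩ := hμ.exists_hasEigenvector
  obtain ⟨z, rfl⟩ := W.mkQ_surjective q
  refine ⟨μ, z, fun h => hq.2 ((Submodule.Quotient.mk_eq_zero W).mpr h), ?_⟩
  have := hq.apply_eq_smul
  exact (Submodule.Quotient.eq W).mp this

theorem diff_rank {n : ℕ} (A B : Matrix (Fin n) (Fin n) ℂ)
    (hB : IsUnit B.det) (hpr : IsPseudoReflection (A * B⁻¹)) :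
    ∃ u : Fin n → ℂ, u ≠ 0 ∧ ∀ z, ∃ c : ℂ, A.mulVec z - B.mulVec z = c • u := by
  have h1 : (A - B).rank = 1 := by
    have : A - B = (A * B⁻¹ - 1) * B := by
      rw [sub_mul, Matrix.mul_assoc, Matrix.nonsing_inv_mul _ hB, Matrix.mul_one, Matrix.one_mul]
    rw [this, Matrix.rank_mul_eq_left_of_isUnit_det _ _ hB]
    exact hpr
  obtain ⟨u, hu, h⟩ := finrank_eq_one_iff'.mp h1
  refine ⟨u, fun h => hu (Subtype.ext h), fun z => ?_⟩
  obtain ⟨c, hc⟩ := h ⟨(A - B).mulVecLin z, LinearMap.mem_range_self _ z⟩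
  refine ⟨c, ?_⟩
  have := congrArg Subtype.val hc
  simp [Matrix.sub_mulVec] at this
  exact this.symm

/-- Beukers, Théorème 1.2.1. Let `A, B ∈ GLₙ(ℂ)` (`n ≥ 2`) with `A B⁻¹`
a pseudo-reflection. Then `⟨A, B⟩` acts irreducibly on `ℂⁿ` (no nontrivial proper invariant
subspace) iff `A` and `B` have no common eigenvalue. -/
theorem levelt_stmt10 (n : ℕ) (hn : 2 ≤ n) (A B : Matrix (Fin n) (Fin n) ℂ)
    (hA : IsUnit A.det) (hB : IsUnit B.det)
    (hpr : IsPseudoReflection (A * B⁻¹)) :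
    (¬ ∃ W : Submodule ℂ (Fin n → ℂ), 0 < Module.finrank ℂ W ∧ Module.finrank ℂ W < n ∧
        (∀ w ∈ W, A.mulVec w ∈ W) ∧ (∀ w ∈ W, B.mulVec w ∈ W))
      ↔ ¬ ∃ μ : ℂ, HasEigen A μ ∧ HasEigen B μ := by
  obtain ⟨u, hu, hD⟩ := diff_rank A B hB hpr
  rw [not_iff_not]
  constructor
  · rintro ⟨W, hpos, hlt, hAW, hBW⟩
    by_cases hW : ∀ w ∈ W, A.mulVec w = B.mulVec w
    · obtain ⟨μ, w, hw, hw0, h⟩ := eigen_mono A W hAW hpos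
      exact ⟨μ, ⟨w, hw0, h⟩, ⟨w, hw0, by rw [← hW w hw, h]⟩⟩
    · push Not at hW
      obtain ⟨w, hw, hne⟩ := hW
      obtain ⟨c, hc⟩ := hD w
      have hc0 : c ≠ 0 := by
        rintro rfl
        rw [zero_smul] at hc
        exact hne (sub_eq_zero.mp hc)
      have huW : u ∈ W := (W.smul_mem_iff hc0).mp (hc ▸ W.sub_mem (hAW w hw) (hBW w hw))
      obtain ⟨μ, z, hz, h⟩ := eigen_quot A W hAW hlt
      refine ⟨μ, eigen_of_quot A W hAW μ z hz h, eigen_of_quot B W hBW μ z hz ?_⟩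
      obtain ⟨d, hd⟩ := hD z
      have : B.mulVec z - μ • z = (A.mulVec z - μ • z) - d • u := by rw [← hd]; abel
      rw [this]
      exact W.sub_mem h (W.smul_mem _ huW)
  · rintro ⟨μ, ⟨v, hv0, hv⟩, ⟨w, hw0, hw⟩⟩
    obtain ⟨c, hc⟩ := hD w
    by_cases hc0 : c = 0
    · rw [hc0, zero_smul, sub_eq_zero] at hc
      refine ⟨ℂ ∙ w, ?_, ?_, ?_, ?_⟩
      · rw [finrank_span_singleton hw0]; norm_num
      · rw [finrank_span_singleton hw0]; omega
      · intro x hx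
        obtain ⟨a, rfl⟩ := Submodule.mem_span_singleton.mp hx
        rw [Matrix.mulVec_smul, hc, hw]
        exact Submodule.smul_mem _ _ (Submodule.smul_mem _ _ (Submodule.mem_span_singleton_self w))
      · intro x hx
        obtain ⟨a, rfl⟩ := Submodule.mem_span_singleton.mp hx
        rw [Matrix.mulVec_smul, hw]
        exact Submodule.smul_mem _ _ (Submodule.smul_mem _ _ (Submodule.mem_span_singleton_self w))
    · let f : (Fin n → ℂ) →ₗ[ℂ] (Fin n → ℂ) := A.mulVecLin - μ • LinearMap.id
      have hf : ∀ x, f x = A.mulVec x - μ • x := fun x => by simp [f]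
      have huf : u ∈ LinearMap.range f := by
        refine (Submodule.smul_mem_iff _ hc0).mp ?_
        exact ⟨w, by rw [hf, ← hc, hw]⟩
      have hAf : ∀ x ∈ LinearMap.range f, A.mulVec x ∈ LinearMap.range f := by
        intro x hx
        have : A.mulVec x = f x + μ • x := by rw [hf]; abel
        rw [this]
        exact Submodule.add_mem _ ⟨x, rfl⟩ (Submodule.smul_mem _ _ hx)
      refine ⟨LinearMap.range f, ?_, ?_, hAf, ?_⟩
      · exact Module.finrank_pos_iff.mpr ⟨⟨u, huf⟩, 0, fun h => hu (congrArg Subtype.val h)⟩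
      · have hk : 0 < Module.finrank ℂ (LinearMap.ker f) :=
          Module.finrank_pos_iff.mpr ⟨⟨v, by rw [LinearMap.mem_ker, hf, hv, sub_self]⟩, 0,
            fun h => hv0 (congrArg Subtype.val h)⟩
        have := f.finrank_range_add_finrank_ker
        rw [Module.finrank_fin_fun] at this
        omega
      · intro x hx
        obtain ⟨d, hd⟩ := hD x
        have : B.mulVec x = A.mulVec x - d • u := by rw [← hd]; abel
        rw [this]
        exact Submodule.sub_mem _ (hAf x hx) (Submodule.smul_mem _ _ huf)
end

section
/- Let n, p ∈ ℕ with n ≥ 2 and p ≥ 2, and let A₁, A₂, …, A_p ∈ GL_n(ℂ) be matrices having n−1 common columns (there exists an index k such that all columns with index ≠ k coincide across the family). Assume ⋂_{i=1}^{p} spec(A_i) = ∅, i.e. the A_i have no common eigenvalue. Then there exists a single u ∈ GL_n(ℂ) such that for every i ∈ {1,…,p}, u A_i u⁻¹ is the companion matrix of the characteristic polynomial of A_i. -/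
/-- The companion matrix of the monic polynomial `Xⁿ + c_{n−1} X^{n−1} + ⋯ + c₀`:
ones on the subdiagonal, last column `(−c₀, …, −c_{n−1})ᵀ`, zeros elsewhere. -/
def companionMatrix {n : ℕ} (c : Fin n → ℂ) : Matrix (Fin n) (Fin n) ℂ :=
  Matrix.of fun i j =>
    if (j : ℕ) = n - 1 then -c i else if (i : ℕ) = (j : ℕ) + 1 then 1 else 0

open Matrix in
theorem ch_aux {n : ℕ} (A : Matrix (Fin n) (Fin n) ℂ) :
    A ^ n = - ∑ m : Fin n, A.charpoly.coeff m • A ^ (m : ℕ) := by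
  have h := Matrix.aeval_self_charpoly A
  rw [Polynomial.aeval_eq_sum_range, Matrix.charpoly_natDegree_eq_dim, Fintype.card_fin,
    Finset.sum_range_succ] at h
  have h1 : A.charpoly.coeff n = 1 := by
    have := Matrix.charpoly_monic A
    rw [Polynomial.Monic, Polynomial.leadingCoeff, Matrix.charpoly_natDegree_eq_dim,
      Fintype.card_fin] at this
    exact this
  rw [h1, one_smul, ← Fin.sum_univ_eq_sum_range (fun m => A.charpoly.coeff m • A ^ m)] at h
  exact eq_neg_of_add_eq_zero_right h

open Matrix in
theorem ch_vec {n : ℕ} (A : Matrix (Fin n) (Fin n) ℂ) (v : Fin n → ℂ) (i : Fin n) :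
    (A ^ n *ᵥ v) i = - ∑ m : Fin n, A.charpoly.coeff m * (A ^ (m : ℕ) *ᵥ v) i := by
  rw [ch_aux A, Matrix.neg_mulVec, Matrix.sum_mulVec]
  simp [Matrix.smul_mulVec]

open Matrix in
theorem common_mulVec {n : ℕ} {A B : Matrix (Fin n) (Fin n) ℂ} {k : Fin n}
    (h : ∀ l, l ≠ k → ∀ m, A m l = B m l) {v : Fin n → ℂ} (hv : v k = 0) :
    A *ᵥ v = B *ᵥ v := by
  funext m
  simp only [Matrix.mulVec, dotProduct]
  refine Finset.sum_congr rfl fun l _ => ?_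
  by_cases hl : l = k
  · subst hl; simp [hv]
  · rw [h l hl m]

open Matrix in
theorem obs_aux {n : ℕ} (A : Matrix (Fin n) (Fin n) ℂ) (k : Fin n)
    (h : ∀ (μ : ℂ) (v : Fin n → ℂ), v ≠ 0 → A *ᵥ v = μ • v → v k ≠ 0)
    (v : Fin n → ℂ) (hv : ∀ j : Fin n, (A ^ (j : ℕ) *ᵥ v) k = 0) : v = 0 := by
  let O : Matrix (Fin n) (Fin n) ℂ := Matrix.of fun i l => (A ^ (i : ℕ)) k l
  have hO : ∀ w, w ∈ LinearMap.ker O.mulVecLin ↔ ∀ j : Fin n, (A ^ (j : ℕ) *ᵥ w) k = 0 := by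
    intro w
    rw [LinearMap.mem_ker, funext_iff]
    rfl
  have hinv : ∀ w ∈ LinearMap.ker O.mulVecLin, A.mulVecLin w ∈ LinearMap.ker O.mulVecLin := by
    intro w hw
    rw [hO] at hw ⊢
    intro j
    rw [Matrix.mulVecLin_apply, Matrix.mulVec_mulVec, ← pow_succ]
    by_cases hj : (j : ℕ) + 1 < n
    · exact hw ⟨j + 1, hj⟩
    · have : (j : ℕ) + 1 = n := by omega
      rw [this, ch_vec]
      simp [hw]
  by_contra hne
  have hvk := (hO v).2 hv
  have : Nontrivial (LinearMap.ker O.mulVecLin) :=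
    ⟨⟨v, hvk⟩, 0, fun e => hne (congrArg Subtype.val e)⟩
  obtain ⟨μ, hμ⟩ := Module.End.exists_eigenvalue (A.mulVecLin.restrict hinv)
  obtain ⟨w, hw⟩ := hμ.exists_hasEigenvector
  have h0 : (w : Fin n → ℂ) ≠ 0 := fun e => hw.2 (Subtype.ext e)
  have h1 : A *ᵥ (w : Fin n → ℂ) = μ • (w : Fin n → ℂ) := congrArg Subtype.val hw.apply_eq_smul
  refine h μ w h0 h1 ?_
  have := (hO w).1 w.2 ⟨0, k.pos⟩
  simpa using this

open Matrix in
theorem exists_vec {n : ℕ} (A : Matrix (Fin n) (Fin n) ℂ) (k : Fin n)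
    (h : ∀ (μ : ℂ) (v : Fin n → ℂ), v ≠ 0 → A *ᵥ v = μ • v → v k ≠ 0) :
    ∃ v : Fin n → ℂ, (∀ j : ℕ, j + 1 < n → (A ^ j *ᵥ v) k = 0) ∧ (A ^ (n - 1) *ᵥ v) k = 1 := by
  let O : Matrix (Fin n) (Fin n) ℂ := Matrix.of fun i l => (A ^ (i : ℕ)) k l
  have hinj : Function.Injective O.mulVecLin := by
    rw [← LinearMap.ker_eq_bot, LinearMap.ker_eq_bot']
    intro w hw
    exact obs_aux A k h w fun j => congrFun hw j
  have hk := k.pos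
  obtain ⟨v, hv⟩ := (LinearMap.injective_iff_surjective.1 hinj)
    (Pi.single ⟨n - 1, by omega⟩ 1)
  refine ⟨v, fun j hj => ?_, ?_⟩
  · have := congrFun hv ⟨j, by omega⟩
    rw [Pi.single_eq_of_ne (by simp [Fin.ext_iff]; omega)] at this
    exact this
  · have := congrFun hv ⟨n - 1, by omega⟩
    rw [Pi.single_eq_same] at this
    exact this

open Matrix in
theorem krylov_unit {n : ℕ} (A : Matrix (Fin n) (Fin n) ℂ) (k : Fin n) (v : Fin n → ℂ)
    (h0 : ∀ j : ℕ, j + 1 < n → (A ^ j *ᵥ v) k = 0) (h1 : (A ^ (n - 1) *ᵥ v) k = 1) :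
    IsUnit (Matrix.of fun i j : Fin n => (A ^ (j : ℕ) *ᵥ v) i).det := by
  set K : Matrix (Fin n) (Fin n) ℂ := Matrix.of fun i j : Fin n => (A ^ (j : ℕ) *ᵥ v) i with hK
  let O : Matrix (Fin n) (Fin n) ℂ := Matrix.of fun i l => (A ^ ((Fin.rev i : Fin n) : ℕ)) k l
  have hOK : ∀ i j, (O * K) i j = (A ^ (((Fin.rev i : Fin n) : ℕ) + j) *ᵥ v) k := by
    intro i j
    rw [pow_add, ← Matrix.mulVec_mulVec]
    rfl
  have hdet : (O * K).det = 1 := by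
    rw [Matrix.det_of_upperTriangular]
    · refine Finset.prod_eq_one fun i _ => ?_
      rw [hOK, Fin.val_rev, show n - (↑i + 1) + ↑i = n - 1 by omega, h1]
    · intro i j hij
      have : (j : ℕ) < i := hij
      rw [hOK, Fin.val_rev, h0 _ (by omega)]
  rw [Matrix.det_mul, mul_comm] at hdet
  exact IsUnit.of_mul_eq_one _ hdet

/-- If `A₁,…,A_p ∈ GLₙ(ℂ)` (`n, p ≥ 2`) have `n−1` common columns and no
common eigenvalue, then a single conjugation brings every `A i` to the companion matrix of
its characteristic polynomial. -/
theorem levelt_stmt12 (n p : ℕ) (hn : 2 ≤ n) (hp : 2 ≤ p)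
    (A : Fin p → Matrix (Fin n) (Fin n) ℂ) (hA : ∀ i, IsUnit (A i).det)
    (hc : ∃ k : Fin n, ∀ i i' : Fin p, ∀ l : Fin n, l ≠ k → ∀ m : Fin n,
            A i m l = A i' m l)
    (heig : ¬ ∃ μ : ℂ, ∀ i, HasEigen (A i) μ) :
    ∃ u : Matrix (Fin n) (Fin n) ℂ, IsUnit u.det ∧
      ∀ i, u * A i * u⁻¹ = companionMatrix (fun k : Fin n => (A i).charpoly.coeff k) := by
  obtain ⟨k, hk⟩ := hc
  let i0 : Fin p := ⟨0, by omega⟩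
  have hobs : ∀ (μ : ℂ) (v : Fin n → ℂ), v ≠ 0 → (A i0).mulVec v = μ • v → v k ≠ 0 := by
    intro μ v hv hμ hvk
    refine heig ⟨μ, fun i => ⟨v, hv, ?_⟩⟩
    rw [common_mulVec (hk i i0) hvk, hμ]
  obtain ⟨v, h0, h1⟩ := exists_vec (A i0) k hobs
  have hpow : ∀ i, ∀ j : ℕ, j < n → ((A i) ^ j).mulVec v = ((A i0) ^ j).mulVec v := by
    intro i j
    induction j with
    | zero => intro _; simp
    | succ j ih =>
      intro hj
      rw [pow_succ', pow_succ', ← Matrix.mulVec_mulVec, ← Matrix.mulVec_mulVec, ih (by omega)]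
      exact common_mulVec (hk i i0) (h0 j hj)
  have hu := krylov_unit (A i0) k v h0 h1
  set K : Matrix (Fin n) (Fin n) ℂ :=
    Matrix.of fun i j : Fin n => ((A i0) ^ (j : ℕ)).mulVec v i with hK
  refine ⟨K⁻¹, Matrix.isUnit_nonsing_inv_det K hu, fun i => ?_⟩
  rw [Matrix.nonsing_inv_nonsing_inv K hu]
  have key : A i * K = K * companionMatrix (fun k : Fin n => (A i).charpoly.coeff k) := by
    ext a b
    have hl : (A i * K) a b = (((A i) ^ ((b : ℕ) + 1)).mulVec v) a := by
      rw [pow_succ', ← Matrix.mulVec_mulVec, hpow i b b.2]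
      rfl
    rw [hl, Matrix.mul_apply]
    by_cases hb : (b : ℕ) = n - 1
    · rw [show (b : ℕ) + 1 = n by omega, ch_vec, ← Finset.sum_neg_distrib]
      refine Finset.sum_congr rfl fun m _ => ?_
      rw [hpow i m m.2]
      simp only [companionMatrix, Matrix.of_apply, hb, if_true, hK]
      ring
    · have hb' : (b : ℕ) + 1 < n := by omega
      rw [Finset.sum_eq_single ⟨(b : ℕ) + 1, hb'⟩, hpow i _ hb']
      · simp [companionMatrix, hb, hK]
      · intro m _ hm
        have : (m : ℕ) ≠ b + 1 := fun e => hm (Fin.ext e)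
        simp [companionMatrix, hb, this]
      · simp
  rw [Matrix.mul_assoc, key, ← Matrix.mul_assoc, Matrix.nonsing_inv_mul K hu, Matrix.one_mul]
end

section
/- Let n, p ∈ ℕ with n ≥ 2 and p ≥ 2. Let A₁, …, A_p ∈ GL_n(ℂ) and B₁, …, B_p ∈ GL_n(ℂ) be two families of matrices, each family having n−1 common columns (for each family there is an index k such that all columns with index ≠ k coincide across that family; the index may differ between the two families). Assume that for every i the characteristic polynomial of A_i equals the characteristic polynomial of B_i, and that ⋂_{i=1}^{p} spec(A_i) = ∅. Then there exists u ∈ GL_n(ℂ) such that B_i = u A_i u⁻¹ for every i ∈ {1,…,p}. -/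
open Matrix Polynomial

lemma lev_hasEigen_iff {n : ℕ} (A : Matrix (Fin n) (Fin n) ℂ) (μ : ℂ) :
    HasEigen A μ ↔ A.charpoly.eval μ = 0 := by
  rw [Matrix.eval_charpoly, ← Matrix.exists_mulVec_eq_zero_iff]
  unfold HasEigen
  refine exists_congr fun v => and_congr_right fun _ => ?_
  rw [Matrix.sub_mulVec, sub_eq_zero]
  simp [Matrix.scalar_apply, Matrix.mulVec_diagonal, eq_comm, funext_iff]

lemma lev_pow {n : ℕ} (A : Matrix (Fin n) (Fin n) ℂ) :
    A ^ n = -∑ j ∈ Finset.range n, A.charpoly.coeff j • A ^ j := by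
  have h := Matrix.aeval_self_charpoly A
  have hd : A.charpoly.natDegree = n := by simp [Matrix.charpoly_natDegree_eq_dim]
  have hm : A.charpoly.coeff n = 1 := by
    have := Matrix.charpoly_monic A
    rw [Polynomial.Monic, Polynomial.leadingCoeff, hd] at this
    exact this
  rw [Polynomial.aeval_eq_sum_range, hd, Finset.sum_range_succ, hm, one_smul] at h
  exact eq_neg_of_add_eq_zero_right h

/-- companion matrix of size `n` -/
def levComp (n : ℕ) (q : ℂ[X]) : Matrix (Fin n) (Fin n) ℂ :=
  Matrix.of fun a b => if (b : ℕ) + 1 < n then (if (a : ℕ) = b + 1 then 1 else 0) else -q.coeff a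

lemma lev_kernel {n : ℕ} (A : Matrix (Fin n) (Fin n) ℂ) (k : Fin n)
    (h : ¬ ∃ (μ : ℂ) (v : Fin n → ℂ), v ≠ 0 ∧ v k = 0 ∧ A *ᵥ v = μ • v)
    (x : Fin n → ℂ) (hx : ∀ j < n, (A ^ j *ᵥ x) k = 0) : x = 0 := by
  by_contra hx0
  apply h
  let N : Submodule ℂ (Fin n → ℂ) :=
    { carrier := {x | ∀ j < n, (A ^ j *ᵥ x) k = 0}
      add_mem' := by
        intro a b ha hb j hj
        simp [Matrix.mulVec_add, ha j hj, hb j hj]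
      zero_mem' := by intro j hj; simp
      smul_mem' := by
        intro c a ha j hj
        simp [Matrix.mulVec_smul, ha j hj] }
  have hinv : ∀ y ∈ N, (Matrix.toLin' A) y ∈ N := by
    intro y hy j hj
    rw [Matrix.toLin'_apply, Matrix.mulVec_mulVec, ← pow_succ]
    by_cases hj' : j + 1 < n
    · exact hy _ hj'
    · have : j + 1 = n := by omega
      rw [this, lev_pow, Matrix.neg_mulVec, Matrix.sum_mulVec]
      simp only [Pi.neg_apply, Finset.sum_apply, neg_eq_zero]
      refine Finset.sum_eq_zero fun i hi => ?_
      rw [Matrix.smul_mulVec, Pi.smul_apply, hy i (Finset.mem_range.1 hi), smul_zero]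
  have : Nontrivial N := ⟨⟨⟨x, hx⟩, 0, fun e => hx0 (congrArg Subtype.val e)⟩⟩
  obtain ⟨μ, hμ⟩ := Module.End.exists_eigenvalue ((Matrix.toLin' A).restrict hinv)
  obtain ⟨v, hv⟩ := hμ.exists_hasEigenvector
  refine ⟨μ, v.1, fun e => hv.2 (Subtype.ext e), ?_, ?_⟩
  · have := v.2 0 (Nat.lt_of_le_of_lt (Nat.zero_le _) k.2)
    simpa using this
  · have := congrArg Subtype.val hv.apply_eq_smul
    simpa using this

lemma lev_main {n p : ℕ} (A : Fin p → Matrix (Fin n) (Fin n) ℂ) (i₀ : Fin p)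
    (hcA : ∃ k : Fin n, ∀ i i' : Fin p, ∀ l : Fin n, l ≠ k → ∀ m : Fin n,
             A i m l = A i' m l)
    (heig : ¬ ∃ μ : ℂ, ∀ i, HasEigen (A i) μ) :
    ∃ P : Matrix (Fin n) (Fin n) ℂ, IsUnit P.det ∧
      ∀ i, A i * P = P * levComp n (A i).charpoly := by
  obtain ⟨k, hk⟩ := hcA
  have hn : 0 < n := Nat.lt_of_le_of_lt (Nat.zero_le _) k.2
  have hcoin : ∀ i (x : Fin n → ℂ), x k = 0 → A i *ᵥ x = A i₀ *ᵥ x := by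
    intro i x hx
    ext m
    simp only [Matrix.mulVec, dotProduct]
    refine Finset.sum_congr rfl fun l _ => ?_
    by_cases hl : l = k
    · subst hl; simp [hx]
    · rw [hk i i₀ l hl]
  have hker := lev_kernel (A i₀) k (by
    rintro ⟨μ, v, hv0, hvk, hv⟩
    exact heig ⟨μ, fun i => ⟨v, hv0, (hcoin i v hvk).trans hv⟩⟩)
  let O : Matrix (Fin n) (Fin n) ℂ := Matrix.of fun a b => (A i₀ ^ (n - 1 - (a : ℕ))) k b
  have hOm : ∀ x a, (O *ᵥ x) a = (A i₀ ^ (n - 1 - (a : ℕ)) *ᵥ x) k := fun x a => rfl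
  have hO : IsUnit O.det := by
    rw [isUnit_iff_ne_zero]
    intro h0
    obtain ⟨x, hx0, hx⟩ := Matrix.exists_mulVec_eq_zero_iff.2 h0
    refine hx0 (hker x fun j hj => ?_)
    have := congrFun hx ⟨n - 1 - j, by omega⟩
    rw [hOm] at this
    have e : n - 1 - (n - 1 - j) = j := by omega
    simpa [e] using this
  let v : Fin n → ℂ := O⁻¹ *ᵥ (Pi.single ⟨0, hn⟩ 1)
  have hOv : O *ᵥ v = Pi.single ⟨0, hn⟩ 1 := by
    simp only [v]
    rw [Matrix.mulVec_mulVec, Matrix.mul_nonsing_inv _ hO, Matrix.one_mulVec]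
  have hv0 : ∀ j < n - 1, (A i₀ ^ j *ᵥ v) k = 0 := by
    intro j hj
    have := congrFun hOv ⟨n - 1 - j, by omega⟩
    rw [hOm, Pi.single_apply, if_neg (by simp [Fin.ext_iff]; omega)] at this
    have e : n - 1 - (n - 1 - j) = j := by omega
    simpa [e] using this
  have hv1 : (A i₀ ^ (n - 1) *ᵥ v) k = 1 := by
    have := congrFun hOv ⟨0, hn⟩
    rw [hOm] at this
    simpa using this
  have hpow : ∀ i, ∀ j < n, A i ^ j *ᵥ v = A i₀ ^ j *ᵥ v := by
    intro i j
    induction j with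
    | zero => intro _; simp
    | succ j ih =>
      intro hj
      rw [pow_succ', pow_succ', ← Matrix.mulVec_mulVec, ← Matrix.mulVec_mulVec, ih (by omega),
        hcoin i _ (hv0 j (by omega))]
  let P : Matrix (Fin n) (Fin n) ℂ := Matrix.of fun a b => (A i₀ ^ (b : ℕ) *ᵥ v) a
  have hOP : ∀ a b, (O * P) a b = (A i₀ ^ (n - 1 - (a : ℕ) + b) *ᵥ v) k := by
    intro a b
    rw [pow_add, ← Matrix.mulVec_mulVec]
    rfl
  have hdet : (O * P).det = 1 := by
    rw [Matrix.det_of_upperTriangular]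
    · refine Finset.prod_eq_one fun a _ => ?_
      rw [hOP, Nat.sub_add_cancel (by omega), hv1]
    · intro a b hab
      have hab' : (b : ℕ) < a := hab
      rw [hOP, hv0 _ (by omega)]
  refine ⟨P, ?_, fun i => ?_⟩
  · rw [Matrix.det_mul] at hdet
    exact IsUnit.of_mul_eq_one_right _ hdet
  · ext a b
    have hL : (A i * P) a b = (A i ^ ((b : ℕ) + 1) *ᵥ v) a := by
      rw [pow_succ', ← Matrix.mulVec_mulVec, hpow i b b.2]
      rfl
    rw [hL, Matrix.mul_apply]
    by_cases hb : (b : ℕ) + 1 < n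
    · rw [hpow i _ hb, Finset.sum_eq_single ⟨(b : ℕ) + 1, hb⟩]
      · simp [levComp, hb, P]
      · intro c _ hc
        have : (c : ℕ) ≠ b + 1 := fun e => hc (Fin.ext e)
        simp [levComp, hb, this]
      · simp
    · have e : (b : ℕ) + 1 = n := by omega
      rw [e, lev_pow, Matrix.neg_mulVec, Matrix.sum_mulVec, Pi.neg_apply, Finset.sum_apply,
        ← Finset.sum_neg_distrib, Finset.sum_range]
      refine Finset.sum_congr rfl fun c _ => ?_
      rw [Matrix.smul_mulVec, hpow i c c.2]
      simp [levComp, P, e, mul_comm]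

/-- uniqueness in Levelt's theorem. Two families `A₁,…,A_p` and
`B₁,…,B_p` in `GLₙ(ℂ)` (`n, p ≥ 2`), each having `n−1` common columns, with
`charpoly (A i) = charpoly (B i)` for all `i` and the `A i` having no common eigenvalue,
are simultaneously conjugate: `B i = u (A i) u⁻¹` for a single `u ∈ GLₙ(ℂ)`. -/
theorem levelt_stmt13 (n p : ℕ) (hn : 2 ≤ n) (hp : 2 ≤ p)
    (A B : Fin p → Matrix (Fin n) (Fin n) ℂ)
    (hA : ∀ i, IsUnit (A i).det) (hB : ∀ i, IsUnit (B i).det)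
    (hcA : ∃ k : Fin n, ∀ i i' : Fin p, ∀ l : Fin n, l ≠ k → ∀ m : Fin n,
             A i m l = A i' m l)
    (hcB : ∃ k : Fin n, ∀ i i' : Fin p, ∀ l : Fin n, l ≠ k → ∀ m : Fin n,
             B i m l = B i' m l)
    (hchar : ∀ i, (A i).charpoly = (B i).charpoly)
    (heig : ¬ ∃ μ : ℂ, ∀ i, HasEigen (A i) μ) :
    ∃ u : Matrix (Fin n) (Fin n) ℂ, IsUnit u.det ∧ ∀ i, B i = u * A i * u⁻¹ := by
  have i₀ : Fin p := ⟨0, by omega⟩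
  obtain ⟨P, hP, hAP⟩ := lev_main A i₀ hcA heig
  obtain ⟨Q, hQ, hBQ⟩ := lev_main B i₀ hcB (by
    rintro ⟨μ, h⟩
    refine heig ⟨μ, fun i => ?_⟩
    have := h i
    rw [lev_hasEigen_iff] at this ⊢
    rw [hchar i, this])
  have hPi : IsUnit (P⁻¹).det := (Matrix.isUnit_nonsing_inv_det_iff).2 hP
  refine ⟨Q * P⁻¹, by rw [Matrix.det_mul]; exact hQ.mul hPi, fun i => ?_⟩
  have h1 : B i = Q * levComp n (B i).charpoly * Q⁻¹ := by
    rw [← hBQ, Matrix.mul_assoc, Matrix.mul_nonsing_inv _ hQ, Matrix.mul_one]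
  have h2 : P⁻¹ * A i * P = levComp n (A i).charpoly := by
    rw [Matrix.mul_assoc, hAP, ← Matrix.mul_assoc, Matrix.nonsing_inv_mul _ hP, Matrix.one_mul]
  rw [Matrix.mul_inv_rev, Matrix.nonsing_inv_nonsing_inv _ hP, h1, ← hchar i, ← h2]
  simp only [Matrix.mul_assoc]
end
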